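/- Let K ∈ ℝ, N ∈ (1,∞) and let a < b be finite real numbers; if K > 0 assume additionally that b − a ≤ π·√((N−1)/K). Let h be an MCP(K,N) density on (a,b). Then the one-sided limits lim_{x → a⁺} h(x) and lim_{x → b⁻} h(x) exist and are finite; in particular h extends to a continuous function on the closed interval [a,b]. -/

import Mathlib

open Real MeasureTheory ENNReal

/-- The finite part of the distortion coefficient `σ_{K,N}^{(t)}(θ)`. -/
noncomputable def sigmaR (K N t θ : ℝ) : ℝ :=
  if 0 < K * θ ^ 2 then
    Real.sin (t * θ * Real.sqrt (K / N)) / Real.sin (θ * Real.sqrt (K / N))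
  else if K * θ ^ 2 = 0 ∨ N = 0 then t
  else Real.sinh (t * θ * Real.sqrt (-K / N)) / Real.sinh (θ * Real.sqrt (-K / N))

/-- The distortion coefficient `σ_{K,N}^{(t)}(θ)`, with value `+∞` when `K·θ² ≥ N·π²`. -/
noncomputable def sigmaE (K N t θ : ℝ) : ℝ≥0∞ :=
  if N * Real.pi ^ 2 ≤ K * θ ^ 2 then ⊤ else ENNReal.ofReal (sigmaR K N t θ)

/-- `h` is an `MCP(K,N)` density on the interval `I ⊆ ℝ`:  `h` is nonnegative on `I` and
`h(t·x₁ + (1−t)·x₀) ≥ (σ_{K,N−1}^{(1−t)}(|x₁ − x₀|))^{N−1} · h(x₀)` for all `x₀, x₁ ∈ I`,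
`t ∈ [0,1]`.  The inequality is formulated in `ℝ≥0∞` so that an infinite coefficient forces
`h(x₀) = 0`. -/
def IsMCPDensity (K N : ℝ) (I : Set ℝ) (h : ℝ → ℝ) : Prop :=
  (∀ x ∈ I, 0 ≤ h x) ∧
  ∀ x₀ ∈ I, ∀ x₁ ∈ I, ∀ t ∈ Set.Icc (0:ℝ) 1,
    sigmaE K (N - 1) (1 - t) |x₁ - x₀| ^ (N - 1) * ENNReal.ofReal (h x₀)
      ≤ ENNReal.ofReal (h (t * x₁ + (1 - t) * x₀))

/-- The function `s_κ`. -/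
noncomputable def sk (κ θ : ℝ) : ℝ :=
  if 0 < κ then Real.sin (Real.sqrt κ * θ) / Real.sqrt κ
  else if κ = 0 then θ
  else Real.sinh (Real.sqrt (-κ) * θ) / Real.sqrt (-κ)

/-- The derivative `s′_κ` of `s_κ`. -/
noncomputable def sk' (κ θ : ℝ) : ℝ :=
  if 0 < κ then Real.cos (Real.sqrt κ * θ)
  else if κ = 0 then 1
  else Real.cosh (Real.sqrt (-κ) * θ)

/-!
Put `κ = K / (N - 1)` and `w θ = s_κ(θ) ^ (N - 1)`. Since `σ_{K,N-1}^{(t)}(θ) = s_κ(tθ) / s_κ(θ)`,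
the density condition says that `x ↦ h x / w |c - x|` increases as `x` moves towards `c`, as long as
`|c - x|` is below the diameter bound `π / √κ`. Taking `c` inside the interval and close to
an endpoint makes `h`, near that endpoint, the product of a monotone nonnegative function and a
continuous one, so its one-sided limit exists. At an interior point, one choice of `c` on each side
makes one quotient increasing and the other decreasing, and the two squeeze `h` to its value.
-/

open Filter Set Topology

section DivMonotone

variable {α : Type*} [TopologicalSpace α] [LinearOrder α] {f u v : α → ℝ} {s t : Set α} {x : α}

theorem continuousWithinAt_Ici_of_monotoneOn_div_of_antitoneOn_div
    (hs : s ∈ 𝓝[≥] x) (hfu : MonotoneOn (fun y => f y / u y) s)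
    (hu : ContinuousWithinAt u (Ici x) x) (hu_pos : ∀ y ∈ s, 0 < u y)
    (ht : t ∈ 𝓝[≥] x) (hfv : AntitoneOn (fun y => f y / v y) t)
    (hv : ContinuousWithinAt v (Ici x) x) (hv_pos : ∀ y ∈ t, 0 < v y) :
    ContinuousWithinAt f (Ici x) x := by
  have hxs : x ∈ s := mem_of_mem_nhdsWithin self_mem_Ici hs
  have hxt : x ∈ t := mem_of_mem_nhdsWithin self_mem_Ici ht
  have lower_tendsto : Tendsto (fun y => f x / u x * u y) (𝓝[≥] x) (𝓝 (f x)) := by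
    simpa only [div_mul_cancel₀ _ (hu_pos x hxs).ne'] using hu.tendsto.const_mul (f x / u x)
  have upper_tendsto : Tendsto (fun y => f x / v x * v y) (𝓝[≥] x) (𝓝 (f x)) := by
    simpa only [div_mul_cancel₀ _ (hv_pos x hxt).ne'] using hv.tendsto.const_mul (f x / v x)
  refine tendsto_of_tendsto_of_tendsto_of_le_of_le' lower_tendsto upper_tendsto ?_ ?_
  · filter_upwards [self_mem_nhdsWithin, hs] with y hxy hy
    exact (le_div_iff₀ (hu_pos y hy)).1 (hfu hxs hy hxy)
  · filter_upwards [self_mem_nhdsWithin, ht] with y hxy hy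
    exact (div_le_iff₀ (hv_pos y hy)).1 (hfv hxt hy hxy)

theorem continuousAt_of_monotoneOn_div_of_antitoneOn_div
    (hs : s ∈ 𝓝 x) (hfu : MonotoneOn (fun y => f y / u y) s) (hu : ContinuousAt u x)
    (hu_pos : ∀ y ∈ s, 0 < u y)
    (ht : t ∈ 𝓝 x) (hfv : AntitoneOn (fun y => f y / v y) t) (hv : ContinuousAt v x)
    (hv_pos : ∀ y ∈ t, 0 < v y) :
    ContinuousAt f x := by
  refine continuousAt_iff_continuous_left_right.2 ⟨?_, ?_⟩
  · exact continuousWithinAt_Ici_of_monotoneOn_div_of_antitoneOn_div (α := αᵒᵈ)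
      (mem_nhdsWithin_of_mem_nhds ht) hfv.dual_left hv.continuousWithinAt hv_pos
      (mem_nhdsWithin_of_mem_nhds hs) hfu.dual_left hu.continuousWithinAt hu_pos
  · exact continuousWithinAt_Ici_of_monotoneOn_div_of_antitoneOn_div
      (mem_nhdsWithin_of_mem_nhds hs) hfu hu.continuousWithinAt hu_pos
      (mem_nhdsWithin_of_mem_nhds ht) hfv hv.continuousWithinAt hv_pos

variable [OrderTopology α] [DenselyOrdered α]

theorem exists_tendsto_nhdsGT_of_monotoneOn_div [NoMaxOrder α]
    (hs : s ∈ 𝓝[>] x) (hfu : MonotoneOn (fun y => f y / u y) s) (hf : ∀ y ∈ s, 0 ≤ f y)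
    (hu : ContinuousWithinAt u (Ioi x) x) (hu_pos : ∀ y ∈ s, 0 < u y) :
    ∃ L, Tendsto f (𝓝[>] x) (𝓝 L) := by
  obtain ⟨z, hxz, hzs⟩ := mem_nhdsGT_iff_exists_Ioo_subset.1 hs
  have ratio_bddBelow : BddBelow ((fun y => f y / u y) '' Ioo x z) :=
    ⟨0, forall_mem_image.2 fun y hy => div_nonneg (hf y (hzs hy)) (hu_pos y (hzs hy)).le⟩
  have ratio_tendsto := (hfu.mono hzs).tendsto_nhdsWithin_Ioo_right (nonempty_Ioo.2 hxz)
    ratio_bddBelow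
  refine ⟨_, (ratio_tendsto.mul hu.tendsto).congr' ?_⟩
  filter_upwards [hs] with y hy
  exact div_mul_cancel₀ _ (hu_pos y hy).ne'

theorem exists_tendsto_nhdsLT_of_antitoneOn_div [NoMinOrder α]
    (hs : s ∈ 𝓝[<] x) (hfu : AntitoneOn (fun y => f y / u y) s) (hf : ∀ y ∈ s, 0 ≤ f y)
    (hu : ContinuousWithinAt u (Iio x) x) (hu_pos : ∀ y ∈ s, 0 < u y) :
    ∃ L, Tendsto f (𝓝[<] x) (𝓝 L) :=
  exists_tendsto_nhdsGT_of_monotoneOn_div (α := αᵒᵈ) hs hfu.dual_left hf hu hu_pos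

end DivMonotone

/-- The open interval `(0, π / √κ)` on which `s_κ` is positive, read as `(0, ∞)` when `κ ≤ 0`. The
upper bound is written as `κ θ² < π²`, which covers both cases at once. -/
def skDomain (κ : ℝ) : Set ℝ := {θ | 0 < θ ∧ κ * θ ^ 2 < π ^ 2}

section Sk

variable {κ η θ : ℝ}

theorem isOpen_skDomain (κ : ℝ) : IsOpen (skDomain κ) :=
  (isOpen_lt (by fun_prop) (by fun_prop)).and (isOpen_lt (by fun_prop) (by fun_prop))

theorem mem_skDomain_of_le (hθ : θ ∈ skDomain κ) (hη : 0 < η) (hηθ : η ≤ θ) :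
    η ∈ skDomain κ := by
  refine ⟨hη, ?_⟩
  rcases le_total κ 0 with hκ | hκ
  · exact (mul_nonpos_of_nonpos_of_nonneg hκ (sq_nonneg η)).trans_lt (by positivity)
  · exact (by gcongr : κ * η ^ 2 ≤ κ * θ ^ 2).trans_lt hθ.2

theorem skDomain_mem_nhdsGT_zero (κ : ℝ) : skDomain κ ∈ 𝓝[>] 0 := by
  have small_mem : {θ : ℝ | κ * θ ^ 2 < π ^ 2} ∈ 𝓝 0 :=
    (isOpen_lt (by fun_prop) continuous_const).mem_nhds (by simp [pi_pos])
  exact inter_mem self_mem_nhdsWithin (mem_nhdsWithin_of_mem_nhds small_mem)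

theorem eventually_nhdsGT_sub_mem_skDomain (κ x : ℝ) : ∀ᶠ y in 𝓝[>] x, y - x ∈ skDomain κ := by
  have shift : Tendsto (fun y => y - x) (𝓝[>] x) (𝓝[>] (x - x)) :=
    (continuous_sub_right x).continuousWithinAt.tendsto_nhdsWithin fun y hy =>
      sub_lt_sub_right (mem_Ioi.1 hy) x
  exact shift (by simpa only [sub_self] using skDomain_mem_nhdsGT_zero κ)

theorem eventually_nhdsLT_sub_mem_skDomain (κ x : ℝ) : ∀ᶠ y in 𝓝[<] x, x - y ∈ skDomain κ := by
  have reflect : Tendsto (fun y => x - y) (𝓝[<] x) (𝓝[>] (x - x)) :=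
    (continuous_sub_left x).continuousWithinAt.tendsto_nhdsWithin fun y hy =>
      sub_lt_sub_left (mem_Iio.1 hy) x
  exact reflect (by simpa only [sub_self] using skDomain_mem_nhdsGT_zero κ)

theorem continuous_sk (κ : ℝ) : Continuous (sk κ) := by
  unfold sk
  split_ifs <;> fun_prop

theorem sk_pos (hθ : θ ∈ skDomain κ) : 0 < sk κ θ := by
  obtain ⟨hθ_pos, hθ_lt⟩ := hθ
  rcases lt_trichotomy κ 0 with hκ | rfl | hκ
  · have hsqrt : 0 < √(-κ) := sqrt_pos.2 (neg_pos.2 hκ)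
    rw [sk, if_neg hκ.not_gt, if_neg hκ.ne]
    exact div_pos (sinh_pos_iff.2 (by positivity)) hsqrt
  · simpa [sk] using hθ_pos
  · have hsqrt : 0 < √κ := sqrt_pos.2 hκ
    have angle_lt_pi : √κ * θ < π := by
      refine lt_of_pow_lt_pow_left₀ 2 pi_pos.le ?_
      rwa [mul_pow, sq_sqrt hκ.le]
    rw [sk, if_pos hκ]
    exact div_pos (sin_pos_of_pos_of_lt_pi (by positivity) angle_lt_pi) hsqrt

theorem sigmaR_eq_sk_div_sk {M : ℝ} (hM : 0 < M) (hθ : 0 < θ) (K t : ℝ) :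
    sigmaR K M t θ = sk (K / M) (t * θ) / sk (K / M) θ := by
  have hθ_sq : 0 < θ ^ 2 := by positivity
  rcases lt_trichotomy K 0 with hK | rfl | hK
  · have hκ : K / M < 0 := div_neg_of_neg_of_pos hK hM
    have hKθ : K * θ ^ 2 < 0 := mul_neg_of_neg_of_pos hK hθ_sq
    have hsqrt : √(-(K / M)) ≠ 0 := (sqrt_pos.2 (neg_pos.2 hκ)).ne'
    rw [sigmaR, if_neg hKθ.not_gt, if_neg (not_or.2 ⟨hKθ.ne, hM.ne'⟩), sk, sk,
      if_neg hκ.not_gt, if_neg hκ.ne, if_neg hκ.not_gt, if_neg hκ.ne,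
      div_div_div_cancel_right₀ hsqrt, neg_div, mul_comm θ, mul_comm (t * θ)]
  · simp [sigmaR, sk, hθ.ne']
  · have hκ : 0 < K / M := div_pos hK hM
    rw [sigmaR, if_pos (mul_pos hK hθ_sq), sk, sk, if_pos hκ, if_pos hκ,
      div_div_div_cancel_right₀ (sqrt_pos.2 hκ).ne', mul_comm θ, mul_comm (t * θ)]

end Sk

/-- The comparison density `s_κ(θ) ^ (N - 1)` with `κ = K / (N - 1)`: the `MCP(K,N)` condition
bounds a density by multiples of this function of the distance to a fixed point. -/
noncomputable def mcpWeight (K N θ : ℝ) : ℝ := sk (K / (N - 1)) θ ^ (N - 1)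

section McpWeight

variable {K N t θ : ℝ}

theorem continuous_mcpWeight (hN : 1 < N) : Continuous (mcpWeight K N) :=
  (continuous_sk _).rpow_const fun _ => Or.inr (sub_pos.2 hN).le

theorem mcpWeight_pos (hθ : θ ∈ skDomain (K / (N - 1))) : 0 < mcpWeight K N θ :=
  rpow_pos_of_pos (sk_pos hθ) _

theorem sigmaE_rpow_eq_mcpWeight_div (hN : 1 < N) (hθ : θ ∈ skDomain (K / (N - 1)))
    (htθ : t * θ ∈ skDomain (K / (N - 1))) :
    sigmaE K (N - 1) t θ ^ (N - 1) =
      ENNReal.ofReal (mcpWeight K N (t * θ) / mcpWeight K N θ) := by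
  have hM : 0 < N - 1 := sub_pos.2 hN
  have below_diameter : K * θ ^ 2 < (N - 1) * π ^ 2 := by
    have := hθ.2
    rwa [div_mul_eq_mul_div, div_lt_iff₀ hM, mul_comm (π ^ 2)] at this
  have ratio_nonneg := div_nonneg (sk_pos htθ).le (sk_pos hθ).le
  rw [sigmaE, if_neg below_diameter.not_ge, sigmaR_eq_sk_div_sk hM hθ.1,
    ENNReal.ofReal_rpow_of_nonneg ratio_nonneg hM.le, div_rpow (sk_pos htθ).le (sk_pos hθ).le,
    mcpWeight, mcpWeight]

end McpWeight

namespace IsMCPDensity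

variable {K N c x y : ℝ} {I : Set ℝ} {h : ℝ → ℝ}

theorem div_mcpWeight_le_div_mcpWeight (hh : IsMCPDensity K N I h) (hN : 1 < N)
    (hx : x ∈ I) (hc : c ∈ I) (hy : y ∈ I) (hyxc : y ∈ segment ℝ x c) (hyc : y ≠ c)
    (hxc : |c - x| ∈ skDomain (K / (N - 1))) :
    h x / mcpWeight K N |c - x| ≤ h y / mcpWeight K N |c - y| := by
  obtain ⟨r, t, hr, ht, hrt, rfl⟩ := hyxc
  obtain rfl : r = 1 - t := eq_sub_of_add_eq hrt
  simp only [smul_eq_mul] at hy hyc ⊢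
  have dist_eq : |c - ((1 - t) * x + t * c)| = (1 - t) * |c - x| := by
    rw [← abs_of_nonneg hr, ← abs_mul, abs_of_nonneg hr]
    ring_nf
  have dist_mem : (1 - t) * |c - x| ∈ skDomain (K / (N - 1)) :=
    mem_skDomain_of_le hxc (dist_eq ▸ abs_pos.2 (sub_ne_zero.2 hyc.symm))
      (mul_le_of_le_one_left (abs_nonneg _) (sub_le_self _ ht))
  have w_pos := mcpWeight_pos hxc
  have w_pos' := mcpWeight_pos dist_mem
  have mcp := hh.2 x hx c hc t ⟨ht, sub_nonneg.1 hr⟩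
  rw [sigmaE_rpow_eq_mcpWeight_div hN hxc dist_mem, ← ENNReal.ofReal_mul (by positivity),
    add_comm, ENNReal.ofReal_le_ofReal_iff (hh.1 _ hy)] at mcp
  rw [dist_eq, le_div_iff₀ w_pos']
  calc h x / mcpWeight K N |c - x| * mcpWeight K N ((1 - t) * |c - x|)
      = mcpWeight K N ((1 - t) * |c - x|) / mcpWeight K N |c - x| * h x := by ring
    _ ≤ h ((1 - t) * x + t * c) := mcp

theorem monotoneOn_div_mcpWeight (hh : IsMCPDensity K N I h) (hN : 1 < N) (hc : c ∈ I) :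
    MonotoneOn (fun x => h x / mcpWeight K N (c - x))
      {x ∈ I | c - x ∈ skDomain (K / (N - 1))} := by
  rintro x ⟨hx, hxc⟩ y ⟨hy, hyc⟩ hxy
  have hyc_lt : y < c := sub_pos.1 hyc.1
  have y_mem_segment : y ∈ segment ℝ x c := Icc_subset_segment ⟨hxy, hyc_lt.le⟩
  have := hh.div_mcpWeight_le_div_mcpWeight hN hx hc hy y_mem_segment hyc_lt.ne
    (by rwa [abs_of_pos hxc.1])
  rwa [abs_of_pos hxc.1, abs_of_pos hyc.1] at this

theorem antitoneOn_div_mcpWeight (hh : IsMCPDensity K N I h) (hN : 1 < N) (hc : c ∈ I) :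
    AntitoneOn (fun x => h x / mcpWeight K N (x - c))
      {x ∈ I | x - c ∈ skDomain (K / (N - 1))} := by
  rintro y ⟨hy, hyc⟩ x ⟨hx, hxc⟩ hyx
  have hyc_lt : c < y := sub_pos.1 hyc.1
  have y_mem_segment : y ∈ segment ℝ x c := segment_symm ℝ c x ▸ Icc_subset_segment ⟨hyc_lt.le, hyx⟩
  have := hh.div_mcpWeight_le_div_mcpWeight hN hx hc hy y_mem_segment hyc_lt.ne'
    (by rwa [abs_sub_comm, abs_of_pos hxc.1])
  rwa [abs_sub_comm, abs_of_pos hxc.1, abs_sub_comm, abs_of_pos hyc.1] at this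

theorem continuousAt (hh : IsMCPDensity K N I h) (hN : 1 < N) (hI : I ∈ 𝓝 x) :
    ContinuousAt h x := by
  obtain ⟨d, hd, hxd⟩ := ((eventually_mem_set.2 (mem_nhdsWithin_of_mem_nhds hI)).and
    (eventually_nhdsGT_sub_mem_skDomain (K / (N - 1)) x)).exists
  obtain ⟨c, hc, hcx⟩ := ((eventually_mem_set.2 (mem_nhdsWithin_of_mem_nhds hI)).and
    (eventually_nhdsLT_sub_mem_skDomain (K / (N - 1)) x)).exists
  have w_cont : Continuous (mcpWeight K N) := continuous_mcpWeight hN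
  have left_of_d_mem : {y | d - y ∈ skDomain (K / (N - 1))} ∈ 𝓝 x :=
    ((isOpen_skDomain _).preimage (continuous_sub_left d)).mem_nhds hxd
  have right_of_c_mem : {y | y - c ∈ skDomain (K / (N - 1))} ∈ 𝓝 x :=
    ((isOpen_skDomain _).preimage (continuous_sub_right c)).mem_nhds hcx
  exact continuousAt_of_monotoneOn_div_of_antitoneOn_div
    (inter_mem hI left_of_d_mem) (hh.monotoneOn_div_mcpWeight hN hd) (by fun_prop)
    (fun y hy => mcpWeight_pos hy.2)
    (inter_mem hI right_of_c_mem) (hh.antitoneOn_div_mcpWeight hN hc) (by fun_prop)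
    (fun y hy => mcpWeight_pos hy.2)

theorem exists_tendsto_nhdsGT (hh : IsMCPDensity K N I h) (hN : 1 < N) (hI : I ∈ 𝓝[>] x) :
    ∃ L, Tendsto h (𝓝[>] x) (𝓝 L) := by
  obtain ⟨c, hc, hcx⟩ := ((eventually_mem_set.2 hI).and
    (eventually_nhdsGT_sub_mem_skDomain (K / (N - 1)) x)).exists
  have w_cont : Continuous (mcpWeight K N) := continuous_mcpWeight hN
  have left_of_c_mem : {y | c - y ∈ skDomain (K / (N - 1))} ∈ 𝓝 x :=
    ((isOpen_skDomain _).preimage (continuous_sub_left c)).mem_nhds hcx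
  exact exists_tendsto_nhdsGT_of_monotoneOn_div
    (inter_mem hI (mem_nhdsWithin_of_mem_nhds left_of_c_mem))
    (hh.monotoneOn_div_mcpWeight hN hc) (fun y hy => hh.1 y hy.1)
    (Continuous.continuousWithinAt (by fun_prop)) (fun y hy => mcpWeight_pos hy.2)

theorem exists_tendsto_nhdsLT (hh : IsMCPDensity K N I h) (hN : 1 < N) (hI : I ∈ 𝓝[<] x) :
    ∃ L, Tendsto h (𝓝[<] x) (𝓝 L) := by
  obtain ⟨c, hc, hcx⟩ := ((eventually_mem_set.2 hI).and
    (eventually_nhdsLT_sub_mem_skDomain (K / (N - 1)) x)).exists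
  have w_cont : Continuous (mcpWeight K N) := continuous_mcpWeight hN
  have right_of_c_mem : {y | y - c ∈ skDomain (K / (N - 1))} ∈ 𝓝 x :=
    ((isOpen_skDomain _).preimage (continuous_sub_right c)).mem_nhds hcx
  exact exists_tendsto_nhdsLT_of_antitoneOn_div
    (inter_mem hI (mem_nhdsWithin_of_mem_nhds right_of_c_mem))
    (hh.antitoneOn_div_mcpWeight hN hc) (fun y hy => hh.1 y hy.1)
    (Continuous.continuousWithinAt (by fun_prop)) (fun y hy => mcpWeight_pos hy.2)

end IsMCPDensity

theorem mcp_density_extends_continuously_general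
    (K N a b : ℝ) (hN : 1 < N) (hab : a < b)
    (h : ℝ → ℝ) (hh : IsMCPDensity K N (Ioo a b) h) :
    (∃ La : ℝ, Tendsto h (𝓝[>] a) (𝓝 La)) ∧
    (∃ Lb : ℝ, Tendsto h (𝓝[<] b) (𝓝 Lb)) ∧
    ∃ H : ℝ → ℝ, ContinuousOn H (Icc a b) ∧ ∀ x ∈ Ioo a b, H x = h x := by
  obtain ⟨La, hLa⟩ := hh.exists_tendsto_nhdsGT hN (Ioo_mem_nhdsGT hab)
  obtain ⟨Lb, hLb⟩ := hh.exists_tendsto_nhdsLT hN (Ioo_mem_nhdsLT hab)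
  have h_cont : ContinuousOn h (Ioo a b) := fun x hx =>
    (hh.continuousAt hN (isOpen_Ioo.mem_nhds hx)).continuousWithinAt
  exact ⟨⟨La, hLa⟩, ⟨Lb, hLb⟩, extendFrom (Ioo a b) h,
    continuousOn_Icc_extendFrom_Ioo h_cont hLa hLb, extendFrom_extends h_cont⟩

theorem mcp_density_extends_continuously
    (K N a b : ℝ) (hN : 1 < N) (hab : a < b)
    (hK : 0 < K → b - a ≤ Real.pi * Real.sqrt ((N - 1) / K))
    (h : ℝ → ℝ) (hh : IsMCPDensity K N (Set.Ioo a b) h) :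
    (∃ La : ℝ, Filter.Tendsto h (nhdsWithin a (Set.Ioi a)) (nhds La)) ∧
    (∃ Lb : ℝ, Filter.Tendsto h (nhdsWithin b (Set.Iio b)) (nhds Lb)) ∧
    ∃ H : ℝ → ℝ, ContinuousOn H (Set.Icc a b) ∧ ∀ x ∈ Set.Ioo a b, H x = h x :=
  mcp_density_extends_continuously_general K N a b hN hab h hh
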